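/- Let E and F be Banach lattices and let T : E → F be sublinear and monotone. Then the quantity ‖T‖ = sup{‖T(f)‖ : f ∈ E, ‖f‖ ≤ 1} is finite and T is Lipschitz continuous with Lipschitz constant ‖T‖, that is, ‖T(f) − T(g)‖ ≤ ‖T‖·‖f − g‖ for all f, g ∈ E. -/

import Mathlib

/-!
Sublinearity and monotonicity give `|T f - T g| ≤ T |f - g|`, and homogeneity then bounds the norm
of the right-hand side by `‖T‖ * ‖f - g‖` once `‖T‖` is finite. If it were not, there would be
vectors `f n` with `‖f n‖ ≤ 1` and `4 ^ n < ‖T (f n)‖`; by completeness all the `(1 / 2) ^ n • f n`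
lie in one order interval `[-g, g]`, on which a monotone operator is bounded in norm, although
`2 ^ n < ‖T ((1 / 2) ^ n • f n)‖`.
-/

theorem abs_map_sub_map_le {α β : Type*}
    [AddCommGroup α] [Lattice α] [AddCommGroup β] [Lattice β] [IsOrderedAddMonoid β]
    {T : α → β} (hsub : ∀ f g, T (f + g) ≤ T f + T g) (hmono : Monotone T) (f g : α) :
    |T f - T g| ≤ T |f - g| := by
  have sub_le (f g : α) : T f - T g ≤ T |f - g| :=
    calc T f - T g ≤ T (f - g) := sub_le_iff_le_add.2 (by simpa using hsub (f - g) g)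
      _ ≤ T |f - g| := hmono (le_abs_self _)
  refine abs_le'.2 ⟨sub_le f g, ?_⟩
  rw [neg_sub, abs_sub_comm]
  exact sub_le g f

theorem norm_map_le_mul_norm_of_forall_norm_le_one {E F : Type*}
    [NormedAddCommGroup E] [NormedSpace ℝ E] [SeminormedAddCommGroup F] [NormedSpace ℝ F]
    {T : E → F} (hpos : ∀ a : ℝ, 0 ≤ a → ∀ f, T (a • f) = a • T f)
    {C : ℝ} (hC : ∀ f, ‖f‖ ≤ 1 → ‖T f‖ ≤ C) (f : E) :
    ‖T f‖ ≤ C * ‖f‖ := by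
  have map_smul_normalize : T f = ‖f‖ • T (NormedSpace.normalize f) := by
    rw [← hpos _ (norm_nonneg f), NormedSpace.norm_smul_normalize]
  have norm_normalize_le : ‖NormedSpace.normalize f‖ ≤ 1 := by
    rcases eq_or_ne f 0 with rfl | hf
    · simp
    · exact (NormedSpace.norm_normalize hf).le
  calc ‖T f‖ = ‖T (NormedSpace.normalize f)‖ * ‖f‖ := by
        rw [map_smul_normalize, norm_smul, norm_norm, mul_comm]
    _ ≤ C * ‖f‖ := by gcongr; exact hC _ norm_normalize_le

theorem norm_le_norm_add_norm_of_le_of_le {F : Type*}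
    [NormedAddCommGroup F] [Lattice F] [HasSolidNorm F] [IsOrderedAddMonoid F]
    {x y z : F} (hxy : x ≤ y) (hyz : y ≤ z) :
    ‖y‖ ≤ ‖x‖ + ‖z‖ := by
  have abs_le_add : |y| ≤ |x| + |z| := by
    refine abs_le'.2 ⟨?_, ?_⟩
    · calc y ≤ |z| := hyz.trans (le_abs_self z)
        _ ≤ |x| + |z| := le_add_of_nonneg_left (abs_nonneg x)
    · calc -y ≤ |x| := (neg_le_neg hxy).trans (neg_le_abs x)
        _ ≤ |x| + |z| := le_add_of_nonneg_right (abs_nonneg z)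
  calc ‖y‖ ≤ ‖|x| + |z|‖ := norm_le_norm_of_abs_le_abs (abs_le_add.trans (le_abs_self _))
    _ ≤ ‖x‖ + ‖z‖ := by simpa only [norm_abs_eq_norm] using norm_add_le |x| |z|

theorem exists_forall_abs_le_of_summable_norm {ι E : Type*}
    [NormedAddCommGroup E] [Lattice E] [HasSolidNorm E] [IsOrderedAddMonoid E] [CompleteSpace E]
    {f : ι → E} (hf : Summable fun i ↦ ‖f i‖) :
    ∃ g, ∀ i, |f i| ≤ g := by
  have summable_abs : Summable fun i ↦ |f i| :=
    Summable.of_norm (by simpa only [norm_abs_eq_norm] using hf)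
  exact ⟨∑' i, |f i|, fun i ↦ summable_abs.le_tsum i fun _ _ ↦ abs_nonneg _⟩

theorem bddAbove_norm_map_of_monotone {E F : Type*}
    [NormedAddCommGroup E] [Lattice E] [HasSolidNorm E] [IsOrderedAddMonoid E] [NormedSpace ℝ E]
    [CompleteSpace E]
    [NormedAddCommGroup F] [Lattice F] [HasSolidNorm F] [IsOrderedAddMonoid F] [NormedSpace ℝ F]
    {T : E → F} (hpos : ∀ a : ℝ, 0 ≤ a → ∀ f, T (a • f) = a • T f) (hmono : Monotone T) :
    BddAbove {r : ℝ | ∃ f : E, ‖f‖ ≤ 1 ∧ r = ‖T f‖} := by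
  by_contra not_bdd
  have exists_large (n : ℕ) : ∃ f : E, ‖f‖ ≤ 1 ∧ 4 ^ n < ‖T f‖ := by
    obtain ⟨_, ⟨f, hf, rfl⟩, hr⟩ := not_bddAbove_iff.1 not_bdd (4 ^ n)
    exact ⟨f, hf, hr⟩
  choose f norm_f_le lt_norm_map using exists_large
  have norm_smul_le (n : ℕ) : ‖(1 / 2 : ℝ) ^ n • f n‖ ≤ (1 / 2) ^ n := by
    rw [norm_smul, Real.norm_of_nonneg (by positivity)]
    exact mul_le_of_le_one_right (by positivity) (norm_f_le n)
  obtain ⟨g, abs_le_g⟩ := exists_forall_abs_le_of_summable_norm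
    (summable_geometric_two.of_nonneg_of_le (fun _ ↦ norm_nonneg _) norm_smul_le)
  have two_pow_lt (n : ℕ) : 2 ^ n < ‖T (-g)‖ + ‖T g‖ :=
    calc (2 : ℝ) ^ n = (1 / 2) ^ n * 4 ^ n := by rw [← mul_pow]; norm_num
      _ < (1 / 2) ^ n * ‖T (f n)‖ := by gcongr; exact lt_norm_map n
      _ = ‖T ((1 / 2 : ℝ) ^ n • f n)‖ := by
        rw [hpos _ (by positivity), norm_smul, Real.norm_of_nonneg (by positivity)]
      _ ≤ ‖T (-g)‖ + ‖T g‖ :=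
        norm_le_norm_add_norm_of_le_of_le
          (hmono (neg_le.1 ((neg_le_abs _).trans (abs_le_g n))))
          (hmono ((le_abs_self _).trans (abs_le_g n)))
  obtain ⟨n, lt_two_pow⟩ := pow_unbounded_of_one_lt (‖T (-g)‖ + ‖T g‖) (one_lt_two (α := ℝ))
  exact lt_asymm lt_two_pow (two_pow_lt n)

theorem lipschitzWith_opNorm_of_sublinear_monotone_general {E F : Type*}
    [NormedAddCommGroup E] [Lattice E] [HasSolidNorm E] [IsOrderedAddMonoid E] [NormedSpace ℝ E]
    [CompleteSpace E]
    [NormedAddCommGroup F] [Lattice F] [HasSolidNorm F] [IsOrderedAddMonoid F] [NormedSpace ℝ F]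
    (T : E → F)
    (hsub : ∀ f g : E, T (f + g) ≤ T f + T g)
    (hpos : ∀ a : ℝ, 0 ≤ a → ∀ f : E, T (a • f) = a • T f)
    (hmono : Monotone T) :
    BddAbove {r : ℝ | ∃ f : E, ‖f‖ ≤ 1 ∧ r = ‖T f‖} ∧
      ∀ f g : E, ‖T f - T g‖ ≤ sSup {r : ℝ | ∃ f : E, ‖f‖ ≤ 1 ∧ r = ‖T f‖} * ‖f - g‖ := by
  have bdd := bddAbove_norm_map_of_monotone hpos hmono
  refine ⟨bdd, fun f g ↦ ?_⟩
  calc ‖T f - T g‖ ≤ ‖T |f - g|‖ :=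
        norm_le_norm_of_abs_le_abs ((abs_map_sub_map_le hsub hmono f g).trans (le_abs_self _))
    _ ≤ sSup {r : ℝ | ∃ f : E, ‖f‖ ≤ 1 ∧ r = ‖T f‖} * ‖|f - g|‖ :=
        norm_map_le_mul_norm_of_forall_norm_le_one hpos
          (fun h hh ↦ le_csSup bdd ⟨h, hh, rfl⟩) _
    _ = sSup {r : ℝ | ∃ f : E, ‖f‖ ≤ 1 ∧ r = ‖T f‖} * ‖f - g‖ := by rw [norm_abs_eq_norm]

/-- Every sublinear and monotone operator `T : E → F` between Banach lattices has finite norm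
`‖T‖ = sup {‖T f‖ : ‖f‖ ≤ 1}` and is Lipschitz continuous with Lipschitz constant `‖T‖`. -/
theorem lipschitzWith_opNorm_of_sublinear_monotone
    {E F : Type*}
    [NormedAddCommGroup E] [Lattice E] [HasSolidNorm E] [IsOrderedAddMonoid E] [NormedSpace ℝ E] [CompleteSpace E]
    [NormedAddCommGroup F] [Lattice F] [HasSolidNorm F] [IsOrderedAddMonoid F] [NormedSpace ℝ F] [CompleteSpace F]
    (T : E → F)
    (hsub : ∀ f g : E, T (f + g) ≤ T f + T g)
    (hpos : ∀ (a : ℝ), 0 ≤ a → ∀ f : E, T (a • f) = a • T f)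
    (hmono : Monotone T) :
    BddAbove {r : ℝ | ∃ f : E, ‖f‖ ≤ 1 ∧ r = ‖T f‖} ∧
      ∀ f g : E, ‖T f - T g‖ ≤ sSup {r : ℝ | ∃ f : E, ‖f‖ ≤ 1 ∧ r = ‖T f‖} * ‖f - g‖ :=
  lipschitzWith_opNorm_of_sublinear_monotone_general T hsub hpos hmono
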